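/- arXiv:0705.0225 — 4 statements merged into one kernel-verified Lean document; each statement's English description precedes it below -/
import Mathlib

section
/- Let B be a Baire topological space and X a compact metric space, and let 𝒦(X) denote the set of nonempty compact subsets of X endowed with the Hausdorff metric. Let h : B → 𝒦(X) be upper semicontinuous, meaning: for every b ∈ B and every ε > 0 there is a neighborhood U of b such that for all b' ∈ U the set h(b') is contained in the open ε-thickening {x ∈ X : dist(x, h(b)) < ε} of h(b). Then the set of points of B at which h is continuous (with respect to the Hausdorff metric on 𝒦(X)) is a residual subset of B. -/
open Topology Metric

/-!
For an upper hemicontinuous `f : B → Set X` and a closed `C`, the set of `b` such that `f b` meets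
`C` is closed, so its frontier is nowhere dense. Off the frontiers obtained from the closures of
the members of a countable basis, meeting such a closure is an open condition on `b`; by regularity
of `X` this is lower hemicontinuity at `b`. Upper and lower hemicontinuity together amount to
continuity for the Vietoris topology, which on nonempty compact sets is the topology of the
Hausdorff metric.
-/

section Residual

variable {B X : Type*} [TopologicalSpace B] [TopologicalSpace X]

theorem eventually_residual_mem_imp_mem_nhds {s : Set B} (hs : IsClosed s) :
    ∀ᶠ b in residual B, b ∈ s → s ∈ 𝓝 b := by
  filter_upwards [coborder_mem_residual hs.isOpen_compl.isLocallyClosed] with b hb hbs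
  rw [hs.isOpen_compl.coborder_eq, frontier_compl, hs.frontier_eq] at hb
  exact mem_interior_iff_mem_nhds.1 (not_not.1 fun hint => hb ⟨hbs, hint⟩)

theorem isClosed_inter_nonempty_of_upperHemicontinuous {f : B → Set X}
    (hf : UpperHemicontinuous f) {C : Set X} (hC : IsClosed C) :
    IsClosed {b | (f b ∩ C).Nonempty} := by
  convert upperHemicontinuous_iff_isClosed_compl_preimage_Iic_compl.1 hf C hC using 1
  ext b
  simp only [Set.mem_ofPred, Set.mem_compl_iff, Set.mem_preimage, Set.mem_Iic,
    Set.subset_compl_iff_disjoint_right, Set.not_disjoint_iff_nonempty_inter]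

theorem eventually_residual_lowerHemicontinuousAt_of_upperHemicontinuous [RegularSpace X]
    [SecondCountableTopology X] {f : B → Set X} (hf : UpperHemicontinuous f) :
    ∀ᶠ b in residual B, LowerHemicontinuousAt f b := by
  have hbasis := TopologicalSpace.isBasis_countableBasis X
  have hmeet : ∀ᶠ b in residual B, ∀ V ∈ TopologicalSpace.countableBasis X,
      (f b ∩ closure V).Nonempty → ∀ᶠ b' in 𝓝 b, (f b' ∩ closure V).Nonempty :=
    (eventually_countable_ball (TopologicalSpace.countable_countableBasis X)).2 fun _ _ =>
      eventually_residual_mem_imp_mem_nhds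
        (isClosed_inter_nonempty_of_upperHemicontinuous hf isClosed_closure)
  filter_upwards [hmeet] with b hb
  refine lowerHemicontinuousAt_iff.2 fun U hU ⟨x, hxf, hxU⟩ => ?_
  obtain ⟨V, hV, hxV, hVU⟩ := hbasis.exists_closure_subset (hU.mem_nhds hxU)
  filter_upwards [hb V hV ⟨x, hxf, subset_closure hxV⟩] with b' hb'
  exact hb'.mono (Set.inter_subset_inter_right _ hVU)

end Residual

section Vietoris

variable {B X : Type*} [TopologicalSpace B] [TopologicalSpace X]

attribute [local instance] TopologicalSpace.vietoris

theorem continuousAt_vietoris_iff {f : B → Set X} {b : B} :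
    ContinuousAt f b ↔ UpperHemicontinuousAt f b ∧ LowerHemicontinuousAt f b := by
  rw [upperHemicontinuousAt_iff_forall_isOpen, lowerHemicontinuousAt_iff, ContinuousAt,
    TopologicalSpace.tendsto_nhds_generateFrom_iff]
  simp only [Set.mem_union, or_imp, forall_and, Set.forall_mem_image]
  rfl

theorem continuousAt_nonemptyCompacts_iff {h : B → TopologicalSpace.NonemptyCompacts X} {b : B} :
    ContinuousAt h b ↔ UpperHemicontinuousAt (fun b => (h b : Set X)) b ∧
      LowerHemicontinuousAt (fun b => (h b : Set X)) b := by
  rw [TopologicalSpace.NonemptyCompacts.isEmbedding_coe.isInducing.continuousAt_iff]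
  exact continuousAt_vietoris_iff

end Vietoris

section Metric

variable {B X : Type*} [TopologicalSpace B]

theorem upperHemicontinuousAt_iff_forall_subset_thickening [PseudoEMetricSpace X]
    {f : B → Set X} {b : B} (hf : IsCompact (f b)) :
    UpperHemicontinuousAt f b ↔ ∀ ε > 0, ∀ᶠ b' in 𝓝 b, f b' ⊆ thickening ε (f b) := by
  rw [upperHemicontinuousAt_iff_preimage_Iic,
    (hasBasis_nhdsSet_thickening hf).forall_iff fun _ _ hst hs =>
      Filter.mem_of_superset hs fun _ hb' => hb'.trans hst]
  rfl

theorem upperHemicontinuousAt_iff_forall_infDist_lt [PseudoMetricSpace X]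
    {f : B → Set X} {b : B} (hf : IsCompact (f b)) (hne : (f b).Nonempty) :
    UpperHemicontinuousAt f b ↔ ∀ ε > 0, ∀ᶠ b' in 𝓝 b, ∀ x ∈ f b', infDist x (f b) < ε := by
  simp only [upperHemicontinuousAt_iff_forall_subset_thickening hf, Set.subset_def,
    mem_thickening_iff_infDist_lt hne]

end Metric

theorem continuity_points_residual_of_upper_semicontinuous_general
    {B : Type*} [TopologicalSpace B]
    {X : Type*} [TopologicalSpace X] [RegularSpace X] [SecondCountableTopology X]
    (h : B → TopologicalSpace.NonemptyCompacts X)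
    (husc : UpperHemicontinuous fun b => (h b : Set X)) :
    {b : B | ContinuousAt h b} ∈ residual B := by
  filter_upwards [eventually_residual_lowerHemicontinuousAt_of_upperHemicontinuous husc] with b hb
  exact continuousAt_nonemptyCompacts_iff.2 ⟨husc b, hb⟩

/-- **Semicontinuity (Proposition p=semi).** Let `B` be a Baire topological space and `X` a
compact metric space, and let `𝒦(X)` be the space of nonempty compact subsets of `X` with the
Hausdorff metric. If `h : B → 𝒦(X)` is upper semicontinuous — for every `b` and `ε > 0` there
is a neighborhood `U` of `b` such that for every `b' ∈ U`, `h b'` is contained in the open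
`ε`-thickening of `h b` — then the set of continuity points of `h` is residual in `B`. -/
theorem continuity_points_residual_of_upper_semicontinuous
    {B : Type*} [TopologicalSpace B] [BaireSpace B]
    {X : Type*} [MetricSpace X] [CompactSpace X]
    (h : B → TopologicalSpace.NonemptyCompacts X)
    (husc : ∀ b : B, ∀ ε : ℝ, 0 < ε → ∃ U ∈ 𝓝 b, ∀ b' ∈ U,
      ∀ x ∈ (h b' : Set X), Metric.infDist x (h b : Set X) < ε) :
    {b : B | ContinuousAt h b} ∈ residual B := by
  exact continuity_points_residual_of_upper_semicontinuous_general h fun b =>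
    (upperHemicontinuousAt_iff_forall_infDist_lt (f := fun b => (h b : Set X))
      (h b).isCompact (h b).nonempty).2 fun ε hε =>
        Filter.eventually_iff_exists_mem.2 (husc b ε hε)
end

section
/- Let M be a topological space, f : M → M a homeomorphism, and U ⊆ M an open set whose iterates f^n(U), n ∈ ℤ, are pairwise disjoint. Let g : M → M be a continuous map, let x ∈ U and a ∈ ℤ satisfy g(x) = f^a(x). Then there exists a neighborhood V of x such that for every y ∈ V ∩ U and every b ∈ ℤ, the equality g(y) = f^b(y) implies b = a. -/
open Topology

/-- The `n`-th iterate (`n ∈ ℤ`) of a homeomorphism `f`, negative `n` denoting iterates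
of `f⁻¹`, obtained as the `n`-th power of the underlying permutation. -/
def zIter {M : Type*} [TopologicalSpace M] (f : M ≃ₜ M) (n : ℤ) : M → M :=
  ⇑(f.toEquiv ^ n : Equiv.Perm M)

theorem zIter_eq_coe_zpow {M : Type*} [TopologicalSpace M] (f : M ≃ₜ M) (n : ℤ) :
    zIter f n = ⇑(f ^ n) :=
  congrArg DFunLike.coe
    (map_zpow (MonoidHom.mk' (Homeomorph.toEquiv : (M ≃ₜ M) → Equiv.Perm M) fun _ _ ↦ rfl) f n).symm

theorem isOpenMap_zIter {M : Type*} [TopologicalSpace M] (f : M ≃ₜ M) (n : ℤ) :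
    IsOpenMap (zIter f n) :=
  zIter_eq_coe_zpow f n ▸ (f ^ n).isOpenMap

theorem locally_constant_power_general {ι X Y : Type*} [TopologicalSpace X] [TopologicalSpace Y]
    {φ : ι → X → Y} {U : Set X} (hdisj : Pairwise fun i j ↦ Disjoint (φ i '' U) (φ j '' U))
    {g : X → Y} {x : X} (hg : ContinuousWithinAt g U x) {a : ι} (ha : φ a '' U ∈ 𝓝 (g x)) :
    ∀ᶠ y in 𝓝[U] x, ∀ b, g y = φ b y → b = a := by
  filter_upwards [hg ha, self_mem_nhdsWithin] with y hya hyU b hyb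
  have hyb' : g y ∈ φ b '' U := ⟨y, hyU, hyb.symm⟩
  exact hdisj.eq (Set.not_disjoint_iff.mpr ⟨g y, hyb', hya⟩)

/-- Let `f` be a homeomorphism of a topological space `M` and `U` an open set whose iterates
`f^n(U)`, `n ∈ ℤ`, are pairwise disjoint. If `g` is continuous, `x ∈ U` and `g x = f^a x`,
then on some neighborhood `V` of `x`, for every `y ∈ V ∩ U`, the only integer `b` with
`g y = f^b y` is `b = a`. -/
theorem locally_constant_power
    {M : Type*} [TopologicalSpace M] (f : M ≃ₜ M) (U : Set M) (hU : IsOpen U)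
    (hdisj : ∀ j k : ℤ, j ≠ k → zIter f j '' U ∩ zIter f k '' U = ∅)
    (g : M → M) (hg : Continuous g) (x : M) (hx : x ∈ U) (a : ℤ)
    (hax : g x = zIter f a x) :
    ∃ V ∈ 𝓝 x, ∀ y ∈ V ∩ U, ∀ b : ℤ, g y = zIter f b y → b = a := by
  have ha : zIter f a '' U ∈ 𝓝 (g x) := hax ▸ (isOpenMap_zIter f a).image_mem_nhds (hU.mem_nhds hx)
  exact mem_nhdsWithin_iff_exists_mem_nhds_inter.mp <| locally_constant_power_general
    (fun j k hjk ↦ Set.disjoint_iff_inter_eq_empty.mpr (hdisj j k hjk)) hg.continuousWithinAt ha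
end

section
/- Let G be a group and f ∈ G an element of infinite order (f^n ≠ 1 for every nonzero integer n) whose centralizer in G equals the cyclic subgroup ⟨f⟩ = {f^n : n ∈ ℤ}. Then every nilpotent subgroup H of G containing f is equal to ⟨f⟩. -/
/-!
Nilpotent groups satisfy the normalizer condition: only the whole group is self-normalizing. An
element normalizing the infinite cyclic group `⟨f⟩` either commutes with `f`, hence lies in `⟨f⟩`,
or inverts `f`, and is then an involution. Conjugates of `f` have infinite order, so those in the
normalizer of `⟨f⟩` lie in `⟨f⟩`; thus this normalizer is self-normalizing and `⟨f⟩` is normal.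
If some `x` inverted `f`, then the centralizer of `x` would be `{1, x}` and self-normalizing as
well, so `x` would be central, which is absurd.
-/

open Subgroup

section

variable {G : Type*} [Group G] {f x y : G}

lemma commute_mul_of_semiconjBy_inv (hx : SemiconjBy x f f⁻¹) (hy : SemiconjBy y f f⁻¹) :
    Commute (x * y) f := by
  have hx' : SemiconjBy x f⁻¹ f := by simpa only [inv_inv] using hx.inv_right
  exact hx'.mul_left hy

lemma eq_one_of_mem_zpowers_of_semiconjBy_inv (hf : ¬IsOfFinOrder f)
    (hx : SemiconjBy x f f⁻¹) (hy : y ∈ zpowers f) (hxy : Commute x y) : y = 1 := by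
  obtain ⟨n, rfl⟩ := mem_zpowers_iff.1 hy
  have hpow : f ^ n = f ^ (-n) := by
    rw [zpow_neg, ← inv_zpow]
    exact mul_right_cancel (hxy.eq.symm.trans (hx.zpow_right n).eq)
  have hn : n = -n := injective_zpow_iff_not_isOfFinOrder.2 hf hpow
  rw [self_eq_neg.1 hn, zpow_zero]

lemma commute_or_semiconjBy_inv_of_mem_normalizer_zpowers (hf : ¬IsOfFinOrder f)
    (hx : x ∈ normalizer (zpowers f : Set G)) : Commute x f ∨ SemiconjBy x f f⁻¹ := by
  have hgen : zpowers f = zpowers (x * f * x⁻¹) := by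
    rw [← MulAut.conj_apply, ← MulEquiv.coe_toMonoidHom, ← MonoidHom.map_zpowers]
    exact (mem_normalizer_iff_map_conj_eq.1 hx).symm
  exact ((zpowers_eq_zpowers_iff hf).1 hgen).imp
    (fun h ↦ (eq_mul_inv_iff_mul_eq.1 h).symm) (fun h ↦ (eq_mul_inv_iff_mul_eq.1 h).symm)

lemma mem_zpowers_or_semiconjBy_inv_of_mem_normalizer (hf : ¬IsOfFinOrder f)
    (hcent : centralizer {f} ≤ zpowers f) (hx : x ∈ normalizer (zpowers f : Set G)) :
    x ∈ zpowers f ∨ SemiconjBy x f f⁻¹ :=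
  (commute_or_semiconjBy_inv_of_mem_normalizer_zpowers hf hx).imp_left
    fun h ↦ hcent (mem_centralizer_singleton_iff.2 h)

lemma mul_self_eq_one_of_semiconjBy_inv (hf : ¬IsOfFinOrder f)
    (hcent : centralizer {f} ≤ zpowers f) (hx : SemiconjBy x f f⁻¹) : x * x = 1 :=
  eq_one_of_mem_zpowers_of_semiconjBy_inv hf hx
    (hcent (mem_centralizer_singleton_iff.2 (commute_mul_of_semiconjBy_inv hx hx)))
    ((Commute.refl x).mul_right (Commute.refl x))

lemma mem_zpowers_of_mem_normalizer_of_not_isOfFinOrder (hf : ¬IsOfFinOrder f)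
    (hcent : centralizer {f} ≤ zpowers f) (hx : x ∈ normalizer (zpowers f : Set G))
    (hxord : ¬IsOfFinOrder x) : x ∈ zpowers f := by
  refine (mem_zpowers_or_semiconjBy_inv_of_mem_normalizer hf hcent hx).resolve_right fun hinv ↦ ?_
  have hsq : x ^ 2 = 1 := (sq x).trans (mul_self_eq_one_of_semiconjBy_inv hf hcent hinv)
  exact hxord (isOfFinOrder_iff_pow_eq_one.2 ⟨2, two_pos, hsq⟩)

lemma normalizer_normalizer_zpowers (hf : ¬IsOfFinOrder f)
    (hcent : centralizer {f} ≤ zpowers f) :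
    normalizer (normalizer (zpowers f : Set G) : Set G) = normalizer (zpowers f : Set G) := by
  have hconj : ∀ g ∈ normalizer (normalizer (zpowers f : Set G) : Set G),
      g * f * g⁻¹ ∈ zpowers f := fun g hg ↦
    mem_zpowers_of_mem_normalizer_of_not_isOfFinOrder hf hcent
      ((mem_normalizer_iff.1 hg f).1 (le_normalizer (mem_zpowers f)))
      fun h ↦ hf ((isConj_iff.2 ⟨g, rfl⟩ : IsConj f _).symm.isOfFinOrder h)
  refine le_antisymm (le_normalizer_iff.2 ?_) le_normalizer
  rintro g hg _ ⟨n, rfl⟩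
  simpa only [conj_zpow] using zpow_mem (hconj g hg) n

lemma eq_one_or_eq_of_commute_of_semiconjBy_inv (hf : ¬IsOfFinOrder f)
    (hcent : centralizer {f} ≤ zpowers f) (hx : SemiconjBy x f f⁻¹)
    (hy : y ∈ normalizer (zpowers f : Set G)) (hxy : Commute x y) : y = 1 ∨ y = x := by
  refine (mem_zpowers_or_semiconjBy_inv_of_mem_normalizer hf hcent hy).imp
    (fun hyf ↦ eq_one_of_mem_zpowers_of_semiconjBy_inv hf hx hyf hxy) fun hyinv ↦ ?_
  have hyx : y * x = 1 := eq_one_of_mem_zpowers_of_semiconjBy_inv hf hx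
    (hcent (mem_centralizer_singleton_iff.2 (commute_mul_of_semiconjBy_inv hyinv hx)))
    (hxy.mul_right (Commute.refl x))
  exact mul_right_cancel (hyx.trans (mul_self_eq_one_of_semiconjBy_inv hf hcent hx).symm)

lemma normalizer_centralizer_of_semiconjBy_inv [(zpowers f).Normal] (hf : ¬IsOfFinOrder f)
    (hcent : centralizer {f} ≤ zpowers f) (hx : SemiconjBy x f f⁻¹) :
    normalizer (centralizer {x} : Set G) = centralizer {x} := by
  refine le_antisymm (fun y hy ↦ ?_) le_normalizer
  have hconj : y * x * y⁻¹ ∈ centralizer {x} :=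
    (mem_normalizer_iff.1 hy x).1 (mem_centralizer_singleton_iff.2 rfl)
  have hnorm : y * x * y⁻¹ ∈ normalizer (zpowers f : Set G) := by
    rw [normalizer_eq_top]
    exact mem_top _
  rw [mem_centralizer_singleton_iff]
  rcases eq_one_or_eq_of_commute_of_semiconjBy_inv hf hcent hx hnorm
    (mem_centralizer_singleton_iff.1 hconj).symm with h | h
  · rw [conj_eq_one_iff.1 h, mul_one, one_mul]
  · exact mul_inv_eq_iff_eq_mul.1 h

theorem zpowers_eq_top_of_normalizerCondition (hG : NormalizerCondition G)
    (hf : ¬IsOfFinOrder f) (hcent : centralizer {f} ≤ zpowers f) : zpowers f = ⊤ := by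
  rw [normalizerCondition_iff_only_full_group_self_normalizing] at hG
  have hnormal : (zpowers f).Normal :=
    normalizer_eq_top_iff.1 (hG _ (normalizer_normalizer_zpowers hf hcent))
  refine eq_top_iff.2 fun x _ ↦ ?_
  refine (mem_zpowers_or_semiconjBy_inv_of_mem_normalizer hf hcent
    (le_normalizer_of_normal (mem_top x))).resolve_right fun hx ↦ hf ?_
  have hcentral : f ∈ centralizer {x} := by
    rw [hG _ (normalizer_centralizer_of_semiconjBy_inv hf hcent hx)]
    exact mem_top f
  have hf1 : f = 1 := eq_one_of_mem_zpowers_of_semiconjBy_inv hf hx (mem_zpowers f)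
    (mem_centralizer_singleton_iff.1 hcentral).symm
  exact hf1 ▸ IsOfFinOrder.one

end

theorem nilpotent_subgroup_eq_zpowers_of_centralizer_eq_general
    {G : Type*} [Group G] {f : G} (hf : ¬IsOfFinOrder f)
    (hcent : centralizer {f} = zpowers f)
    {H : Subgroup G} (hH : NormalizerCondition H) (hfH : f ∈ H) :
    H = zpowers f := by
  lift f to H using hfH
  have hcentH : centralizer {f} ≤ zpowers f := fun g hg ↦ by
    have hgf : (g : G) ∈ zpowers (f : G) := by
      rw [← hcent, mem_centralizer_singleton_iff]
      exact congrArg Subtype.val (mem_centralizer_singleton_iff.1 hg)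
    obtain ⟨n, hn⟩ := hgf
    exact ⟨n, Subtype.ext hn⟩
  have htop : zpowers f = ⊤ :=
    zpowers_eq_top_of_normalizerCondition hH (mt Submonoid.isOfFinOrder_coe.2 hf) hcentH
  calc H = (⊤ : Subgroup H).map H.subtype := by rw [← MonoidHom.range_eq_map, range_subtype]
    _ = zpowers (f : G) := by rw [← htop, MonoidHom.map_zpowers, subtype_apply]

/-- If `f` is an element of infinite order in a group `G` whose centralizer equals the cyclic
subgroup `⟨f⟩` of all integer powers of `f`, then every nilpotent subgroup of `G` containing
`f` equals `⟨f⟩`. -/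
theorem nilpotent_subgroup_eq_zpowers_of_centralizer_eq
    {G : Type*} [Group G] (f : G)
    (hord : ∀ n : ℤ, n ≠ 0 → f ^ n ≠ 1)
    (hcent : Subgroup.centralizer {f} = Subgroup.zpowers f)
    (H : Subgroup G) (hH : Group.IsNilpotent H) (hfH : f ∈ H) :
    H = Subgroup.zpowers f := by
  have hf : ¬IsOfFinOrder f := fun h ↦
    let ⟨n, hn, hfn⟩ := isOfFinOrder_iff_zpow_eq_one.1 h
    hord n hn hfn
  exact nilpotent_subgroup_eq_zpowers_of_centralizer_eq_general hf hcent
    Group.normalizerCondition_of_isNilpotent hfH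
end

section
/- Let E be a finite-dimensional real inner product space of dimension d. Let f, g : E → E be C¹ diffeomorphisms (bijections such that both the map and its inverse are continuously differentiable) satisfying f ∘ g = g ∘ f, and let K ≥ 1 be such that both g and g⁻¹ are Lipschitz with constant K. Then for every x ∈ E and every n ≥ 0, |log |det D(f^n)(x)| − log |det D(f^n)(g(x))|| ≤ 2 d log K, where f^n denotes the n-fold iterate of f and det D(f^n)(x) denotes the determinant of the Fréchet derivative of f^n at x. -/
open scoped NNReal

/-!
If `g ∘ f = h ∘ g`, the chain rule gives
`det Dh(g x) * det Dg(x) = det Dg(f x) * det Df(x)`, so that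
`log |det Df(x)| - log |det Dh(g x)| = log |det Dg(x)| - log |det Dg(f x)|`.
The right-hand side involves `f` only through the base point `f x`: a bi-Lipschitz bound on `g`
bounds it by the same constant for every `f`, in particular for all iterates at once.
A `K`-Lipschitz `g` has `|det Dg| ≤ K ^ d` because it multiplies `d`-dimensional Hausdorff measure
by at most `K ^ d`; the lower bound is obtained in the same way.
-/

open Bornology Filter MeasureTheory Measure Module Metric

theorem antilipschitzWith_of_hasFDerivAt {𝕜 E F : Type*} [NontriviallyNormedField 𝕜]
    [NormedAddCommGroup E] [NormedSpace 𝕜 E] [NormedAddCommGroup F] [NormedSpace 𝕜 F]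
    {g : E → F} {g' : E →L[𝕜] F} {x : E} {K : ℝ≥0}
    (hg : HasFDerivAt g g' x) (hK : AntilipschitzWith K g) : AntilipschitzWith K g' := by
  refine g'.antilipschitz_of_bound fun v ↦ ?_
  have hlim := (hg.lim v (tendsto_norm_cobounded_atTop (E := 𝕜))).norm.const_mul (K : ℝ)
  refine ge_of_tendsto hlim ?_
  filter_upwards [eventually_ne_cobounded (0 : 𝕜)] with c hc
  calc
    ‖v‖ = ‖c‖ * ‖c⁻¹ • v‖ := by rw [← norm_smul, smul_inv_smul₀ hc]
    _ ≤ ‖c‖ * (K * ‖g (x + c⁻¹ • v) - g x‖) := by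
      gcongr
      simpa [dist_eq_norm] using hK.le_mul_dist (x + c⁻¹ • v) x
    _ = K * ‖c • (g (x + c⁻¹ • v) - g x)‖ := by rw [norm_smul, mul_left_comm]

section ChainRule

variable {𝕜 E : Type*} [NontriviallyNormedField 𝕜] [NormedAddCommGroup E] [NormedSpace 𝕜 E]
  {f g h : E → E} {x : E}

theorem det_fderiv_comp (hg : DifferentiableAt 𝕜 g (f x)) (hf : DifferentiableAt 𝕜 f x) :
    (fderiv 𝕜 (g ∘ f) x).det = (fderiv 𝕜 g (f x)).det * (fderiv 𝕜 f x).det := by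
  rw [fderiv_comp x hg hf]
  exact LinearMap.det_comp _ _

theorem det_fderiv_ne_zero_of_leftInverse (hgf : Function.LeftInverse g f)
    (hg : DifferentiableAt 𝕜 g (f x)) (hf : DifferentiableAt 𝕜 f x) :
    (fderiv 𝕜 f x).det ≠ 0 := by
  refine right_ne_zero_of_mul_eq_one (a := (fderiv 𝕜 g (f x)).det) ?_
  rw [← det_fderiv_comp hg hf, hgf.comp_eq_id, fderiv_id]
  exact LinearMap.det_id

theorem det_fderiv_mul_det_fderiv_of_semiconj (hgfh : Function.Semiconj g f h)
    (hf : DifferentiableAt 𝕜 f x) (hgx : DifferentiableAt 𝕜 g x)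
    (hgfx : DifferentiableAt 𝕜 g (f x)) (hh : DifferentiableAt 𝕜 h (g x)) :
    (fderiv 𝕜 h (g x)).det * (fderiv 𝕜 g x).det =
      (fderiv 𝕜 g (f x)).det * (fderiv 𝕜 f x).det := by
  rw [← det_fderiv_comp hh hgx, ← det_fderiv_comp hgfx hf, hgfh.comp_eq]

end ChainRule

section Lipschitz

variable {E : Type*} [NormedAddCommGroup E] [NormedSpace ℝ E] [FiniteDimensional ℝ E]

theorem abs_det_le_opNorm_pow_finrank (A : E →L[ℝ] E) : |A.det| ≤ ‖A‖ ^ finrank ℝ E := by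
  borelize E
  let μ : Measure E := μH[finrank ℝ E]
  have hball : μ (ball 0 1) ≠ 0 := (measure_ball_pos μ 0 one_pos).ne'
  have hdet : ENNReal.ofReal |A.det| * μ (ball 0 1) ≤
      ENNReal.ofReal (‖A‖ ^ finrank ℝ E) * μ (ball 0 1) := by
    calc
      _ = μ (A '' ball 0 1) := (addHaar_image_continuousLinearMap μ A _).symm
      _ ≤ (‖A‖₊ : ENNReal) ^ (finrank ℝ E : ℝ) * μ (ball 0 1) :=
        A.lipschitz.hausdorffMeasure_image_le (Nat.cast_nonneg _) _
      _ = _ := by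
        rw [ENNReal.rpow_natCast, ENNReal.ofReal_pow (norm_nonneg A), ofReal_norm, enorm_eq_nnnorm]
  rw [ENNReal.mul_le_mul_iff_left hball measure_ball_lt_top.ne] at hdet
  exact (ENNReal.ofReal_le_ofReal_iff (by positivity)).1 hdet

theorem one_le_pow_finrank_mul_abs_det {A : E →L[ℝ] E} {K : ℝ≥0} (hA : AntilipschitzWith K A) :
    1 ≤ (K : ℝ) ^ finrank ℝ E * |A.det| := by
  borelize E
  let μ : Measure E := μH[finrank ℝ E]
  have hball : μ (ball 0 1) ≠ 0 := (measure_ball_pos μ 0 one_pos).ne'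
  have hdet : 1 * μ (ball 0 1) ≤
      ENNReal.ofReal ((K : ℝ) ^ finrank ℝ E * |A.det|) * μ (ball 0 1) := by
    calc
      _ = μ (ball 0 1) := one_mul _
      _ ≤ (K : ENNReal) ^ (finrank ℝ E : ℝ) * μ (A '' ball 0 1) :=
        hA.le_hausdorffMeasure_image (Nat.cast_nonneg _) _
      _ = _ := by
        rw [addHaar_image_continuousLinearMap, ENNReal.rpow_natCast,
          ENNReal.ofReal_mul (by positivity), ENNReal.ofReal_pow K.coe_nonneg,
          ENNReal.ofReal_coe_nnreal, mul_assoc]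
  rw [ENNReal.mul_le_mul_iff_left hball measure_ball_lt_top.ne] at hdet
  exact ENNReal.one_le_ofReal.1 hdet

theorem det_ne_zero_of_antilipschitzWith {A : E →L[ℝ] E} {K : ℝ≥0}
    (hA : AntilipschitzWith K A) : A.det ≠ 0 :=
  abs_ne_zero.1 (right_ne_zero_of_mul (one_pos.trans_le (one_le_pow_finrank_mul_abs_det hA)).ne')

theorem log_abs_det_fderiv_mem_Icc {g : E → E} {x : E} {K K' : ℝ≥0}
    (hg : DifferentiableAt ℝ g x) (hK : LipschitzWith K g) (hK' : AntilipschitzWith K' g) :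
    Real.log |(fderiv ℝ g x).det| ∈
      Set.Icc (-(finrank ℝ E * Real.log K')) (finrank ℝ E * Real.log K) := by
  have hderiv : AntilipschitzWith K' (fderiv ℝ g x) :=
    antilipschitzWith_of_hasFDerivAt hg.hasFDerivAt hK'
  have hdet : 0 < |(fderiv ℝ g x).det| := abs_pos.2 (det_ne_zero_of_antilipschitzWith hderiv)
  have lower : 1 ≤ (K' : ℝ) ^ finrank ℝ E * |(fderiv ℝ g x).det| :=
    one_le_pow_finrank_mul_abs_det hderiv
  have upper : |(fderiv ℝ g x).det| ≤ (K : ℝ) ^ finrank ℝ E :=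
    (abs_det_le_opNorm_pow_finrank _).trans <| by
      gcongr
      exact norm_fderiv_le_of_lipschitz ℝ hK
  constructor
  · have hpow : (K' : ℝ) ^ finrank ℝ E ≠ 0 := left_ne_zero_of_mul (one_pos.trans_le lower).ne'
    have hlog := Real.log_nonneg lower
    rw [Real.log_mul hpow hdet.ne', Real.log_pow] at hlog
    linarith
  · rw [← Real.log_pow]
    exact Real.log_le_log hdet upper

theorem distortion_bound_of_commuting_lipschitz_general {f g h : E → E} {K K' : ℝ≥0}
    (hf : Differentiable ℝ f) (hg : Differentiable ℝ g) (hh : Differentiable ℝ h)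
    (hgfh : Function.Semiconj g f h) (hK : LipschitzWith K g) (hK' : AntilipschitzWith K' g)
    {x : E} {n : ℕ} (hdet : (fderiv ℝ f^[n] x).det ≠ 0) :
    abs (Real.log |(fderiv ℝ f^[n] x).det| - Real.log |(fderiv ℝ h^[n] (g x)).det|) ≤
      finrank ℝ E * (Real.log K + Real.log K') := by
  have hgdet (y : E) : (fderiv ℝ g y).det ≠ 0 :=
    det_ne_zero_of_antilipschitzWith (antilipschitzWith_of_hasFDerivAt (hg y).hasFDerivAt hK')
  have hchain := det_fderiv_mul_det_fderiv_of_semiconj (hgfh.iterate_right n)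
    (hf.iterate n x) (hg x) (hg _) (hh.iterate n _)
  have hhdet : (fderiv ℝ h^[n] (g x)).det ≠ 0 :=
    left_ne_zero_of_mul (hchain ▸ mul_ne_zero (hgdet _) hdet)
  have hlog := congrArg Real.log hchain
  rw [Real.log_mul hhdet (hgdet _), Real.log_mul (hgdet _) hdet] at hlog
  obtain ⟨lower, upper⟩ := log_abs_det_fderiv_mem_Icc (hg x) hK hK'
  obtain ⟨lower', upper'⟩ := log_abs_det_fderiv_mem_Icc (hg (f^[n] x)) hK hK'
  simp only [Real.log_abs] at lower upper lower' upper' ⊢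
  rw [abs_le]
  constructor <;> linarith

end Lipschitz

/-- **Bounded distortion along a commuting bi-Lipschitz map.** Let `E` be a `d`-dimensional
real inner product space and let `f, g` be commuting `C¹` diffeomorphisms of `E`, with `g`
and `g⁻¹` Lipschitz of constant `K ≥ 1`. Then for every `x` and `n ≥ 0`,
`|log |det D(fⁿ)(x)| − log |det D(fⁿ)(g x)|| ≤ 2 d log K`. -/
theorem distortion_bound_of_commuting_lipschitz
    {E : Type*} [NormedAddCommGroup E] [InnerProductSpace ℝ E] [FiniteDimensional ℝ E]
    (d : ℕ) (hd : Module.finrank ℝ E = d)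
    (f finv g ginv : E → E)
    (hf : ContDiff ℝ 1 f) (hfinv : ContDiff ℝ 1 finv)
    (hfli : Function.LeftInverse finv f) (hfri : Function.RightInverse finv f)
    (hg : ContDiff ℝ 1 g) (hginv : ContDiff ℝ 1 ginv)
    (hgli : Function.LeftInverse ginv g) (hgri : Function.RightInverse ginv g)
    (hcomm : f ∘ g = g ∘ f)
    (K : ℝ≥0) (hK : 1 ≤ K)
    (hgl : LipschitzWith K g) (hginvl : LipschitzWith K ginv) :
    ∀ x : E, ∀ n : ℕ,
      abs (Real.log (abs ((fderiv ℝ (f^[n]) x).det)) -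
           Real.log (abs ((fderiv ℝ (f^[n]) (g x)).det))) ≤
        2 * d * Real.log K := by
  intro x n
  subst hd
  have hdet := det_fderiv_ne_zero_of_leftInverse (hfli.iterate n)
    ((hfinv.differentiable one_ne_zero).iterate n _) ((hf.differentiable one_ne_zero).iterate n x)
  linarith [distortion_bound_of_commuting_lipschitz_general (hf.differentiable one_ne_zero)
    (hg.differentiable one_ne_zero) (hf.differentiable one_ne_zero)
    (fun y ↦ (congrFun hcomm y).symm) hgl (hginvl.to_rightInverse hgli) hdet]
end
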